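/- Let p be a prime and L an algebraic closure of 𝔽_p. (1) There exists a vector v ∈ V₆ all of whose coefficients lie in the prime subfield 𝔽_p that is stable for the action of G₆; in particular, for v = aXT² + dXU² + hYW² + (jX+kY)TU + rZUW one has Δ₆(v) = 16a⁹d³h⁶k⁶r¹² − 8a⁸d²h⁶j²k⁶r¹² + a⁷dh⁶j⁴k⁶r¹². (2) For any nonzero b, j, e, g, r ∈ Lˣ, the dual cyclic vector v = bYT² + jXTU + eYU² + gXW² + rZUW satisfies Δ₆(v) = 16 b⁹ e³ g⁶ j⁶ r¹², and is stable if and only if p ≠ 2. -/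

import Mathlib

/- The discriminant of the binary quartic A X⁴ + B X³Y + C X²Y² + D XY³ + E Y⁴. -/
def disc4 {R : Type*} [CommRing R] (A B C D E : R) : R :=
  B ^ 2 * C ^ 2 * D ^ 2 - 4 * B ^ 2 * C ^ 3 * E - 4 * B ^ 3 * D ^ 3 + 18 * B ^ 3 * C * D * E
       - 27 * B ^ 4 * E ^ 2 - 4 * A * C ^ 3 * D ^ 2 + 16 * A * C ^ 4 * E + 18 * A * B * C * D ^ 3
       - 80 * A * B * C ^ 2 * D * E - 6 * A * B ^ 2 * D ^ 2 * E + 144 * A * B ^ 2 * C * E ^ 2 - 27 * A ^ 2 * D ^ 4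
       + 144 * A ^ 2 * C * D ^ 2 * E - 128 * A ^ 2 * C ^ 2 * E ^ 2 - 192 * A ^ 2 * B * D * E ^ 2 + 256 * A ^ 3 * E ^ 3

/- The polynomials β₁, …, β₆ of the paper, as integer polynomials in the ten
coordinates a, b, d, e, g, h, j, k, o, r of V₆ (indices 0,…,9 in that order). -/
noncomputable def beta1 : MvPolynomial (Fin 10) ℤ :=
  4 * MvPolynomial.X 0 * MvPolynomial.X 2 * MvPolynomial.X 4 - MvPolynomial.X 4 * MvPolynomial.X 6 ^ 2
noncomputable def beta2 : MvPolynomial (Fin 10) ℤ :=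
  4 * MvPolynomial.X 1 * MvPolynomial.X 2 * MvPolynomial.X 4 + 4 * MvPolynomial.X 0 * MvPolynomial.X 3 * MvPolynomial.X 4 + 4 * MvPolynomial.X 0 * MvPolynomial.X 2 * MvPolynomial.X 5 - MvPolynomial.X 5 * MvPolynomial.X 6 ^ 2
    - 2 * MvPolynomial.X 4 * MvPolynomial.X 6 * MvPolynomial.X 7
noncomputable def beta3 : MvPolynomial (Fin 10) ℤ :=
  4 * MvPolynomial.X 1 * MvPolynomial.X 3 * MvPolynomial.X 4 + 4 * MvPolynomial.X 1 * MvPolynomial.X 2 * MvPolynomial.X 5 + 4 * MvPolynomial.X 0 * MvPolynomial.X 3 * MvPolynomial.X 5 - 2 * MvPolynomial.X 5 * MvPolynomial.X 6 * MvPolynomial.X 7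
    - MvPolynomial.X 4 * MvPolynomial.X 7 ^ 2
noncomputable def beta4 : MvPolynomial (Fin 10) ℤ :=
  4 * MvPolynomial.X 1 * MvPolynomial.X 3 * MvPolynomial.X 5 - MvPolynomial.X 5 * MvPolynomial.X 7 ^ 2
noncomputable def beta5 : MvPolynomial (Fin 10) ℤ :=
  -MvPolynomial.X 0 * MvPolynomial.X 9 ^ 2 - MvPolynomial.X 2 * MvPolynomial.X 8 ^ 2 + MvPolynomial.X 8 * MvPolynomial.X 6 * MvPolynomial.X 9
noncomputable def beta6 : MvPolynomial (Fin 10) ℤ :=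
  -MvPolynomial.X 1 * MvPolynomial.X 9 ^ 2 - MvPolynomial.X 3 * MvPolynomial.X 8 ^ 2 + MvPolynomial.X 8 * MvPolynomial.X 7 * MvPolynomial.X 9

/- Δ₆ = (1/16)·disc₄(F₁F₂): the integer polynomial Q with 16·Q = disc₄(F₁F₂)
(passed as the argument `Q`), interpreted in L via ℤ → L and evaluated at the
coordinates of v ∈ V₆. -/
noncomputable def Delta6 {L : Type*} [CommRing L]
    (Q : MvPolynomial (Fin 10) ℤ) (c : Fin 10 → L) : L :=
  MvPolynomial.aeval c Q

/- Zariski-closedness of a subset of affine n-space over L: it is the common zero locus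
of a set of polynomial functions (with respect to the fixed coordinates). -/
def IsZariskiClosed {n : ℕ} {L : Type*} [CommRing L] (s : Set (Fin n → L)) : Prop :=
  ∃ P : Set (MvPolynomial (Fin n) L), s = {x | ∀ p ∈ P, MvPolynomial.eval x p = 0}

/- Variables of the ambient polynomial ring of V₆: X, Y, Z are inl (inl 0), inl (inl 1),
inl (inr ()) and T, U, W are inr (inl 0), inr (inl 1), inr (inr ()). -/
abbrev Vars6 : Type := (Fin 2 ⊕ Unit) ⊕ (Fin 2 ⊕ Unit)

/- The element of V₆ with coordinates c = (a,b,d,e,g,h,j,k,o,r), recorded as the triple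
of its three components
((aX+bY)T² + (dX+eY)U² + (jX+kY)TU, (gX+hY)W², Z(oT+rU)W),
on which the torus part of G₆ acts by separate scalars. -/
noncomputable def toTriple6 {L : Type*} [CommRing L] (c : Fin 10 → L) :
    MvPolynomial Vars6 L × MvPolynomial Vars6 L × MvPolynomial Vars6 L :=
  ((MvPolynomial.C (c 0) * MvPolynomial.X (Sum.inl (Sum.inl 0)) + MvPolynomial.C (c 1) * MvPolynomial.X (Sum.inl (Sum.inl 1))) * MvPolynomial.X (Sum.inr (Sum.inl 0)) ^ 2
    + (MvPolynomial.C (c 2) * MvPolynomial.X (Sum.inl (Sum.inl 0)) + MvPolynomial.C (c 3) * MvPolynomial.X (Sum.inl (Sum.inl 1))) * MvPolynomial.X (Sum.inr (Sum.inl 1)) ^ 2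
    + (MvPolynomial.C (c 6) * MvPolynomial.X (Sum.inl (Sum.inl 0)) + MvPolynomial.C (c 7) * MvPolynomial.X (Sum.inl (Sum.inl 1))) * (MvPolynomial.X (Sum.inr (Sum.inl 0)) * MvPolynomial.X (Sum.inr (Sum.inl 1))),
   (MvPolynomial.C (c 4) * MvPolynomial.X (Sum.inl (Sum.inl 0)) + MvPolynomial.C (c 5) * MvPolynomial.X (Sum.inl (Sum.inl 1))) * MvPolynomial.X (Sum.inr (Sum.inr ())) ^ 2,
   MvPolynomial.X (Sum.inl (Sum.inr ())) * (MvPolynomial.C (c 8) * MvPolynomial.X (Sum.inr (Sum.inl 0)) + MvPolynomial.C (c 9) * MvPolynomial.X (Sum.inr (Sum.inl 1))) * MvPolynomial.X (Sum.inr (Sum.inr ())))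

/- Linear substitution in (X,Y) by M ∈ SL₂(L) fixing Z, and in (T,U) by N ∈ SL₂(L)
fixing W. -/
noncomputable def sub6 {L : Type*} [CommRing L]
    (M N : Matrix.SpecialLinearGroup (Fin 2) L)
    (v : MvPolynomial Vars6 L) : MvPolynomial Vars6 L :=
  MvPolynomial.aeval
    (Sum.elim
      (Sum.elim (fun i => ∑ j : Fin 2, MvPolynomial.C (M.1 i j) * MvPolynomial.X (Sum.inl (Sum.inl j)))
                (fun _ => MvPolynomial.X (Sum.inl (Sum.inr ()))))
      (Sum.elim (fun i => ∑ j : Fin 2, MvPolynomial.C (N.1 i j) * MvPolynomial.X (Sum.inr (Sum.inl j)))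
                (fun _ => MvPolynomial.X (Sum.inr (Sum.inr ()))))) v

/- The action of G₆ = SL₂(L) × SL₂(L) × Lˣ × Lˣ on V₆ (written on the triple of
components): (M, N, s, t) substitutes (X,Y) by M, (T,U) by N, and multiplies the first
component by s⁻¹, the second by s³t², and the third by t⁻¹. -/
noncomputable def act6 {L : Type*} [Field L]
    (g : Matrix.SpecialLinearGroup (Fin 2) L × Matrix.SpecialLinearGroup (Fin 2) L × Lˣ × Lˣ)
    (v : MvPolynomial Vars6 L × MvPolynomial Vars6 L × MvPolynomial Vars6 L) :
    MvPolynomial Vars6 L × MvPolynomial Vars6 L × MvPolynomial Vars6 L :=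
  (((g.2.2.1 : L))⁻¹ • sub6 g.1 g.2.1 v.1,
   ((g.2.2.1 : L) ^ 3 * (g.2.2.2 : L) ^ 2) • sub6 g.1 g.2.1 v.2.1,
   ((g.2.2.2 : L))⁻¹ • sub6 g.1 g.2.1 v.2.2)

/- Stability: the orbit of v (in the coordinate space of V₆ with respect to its monomial
basis) is Zariski-closed and the stabilizer of v in G₆ is finite. -/
def Stable6 {L : Type*} [Field L] (c : Fin 10 → L) : Prop :=
  IsZariskiClosed {c' : Fin 10 → L |
    ∃ g : Matrix.SpecialLinearGroup (Fin 2) L × Matrix.SpecialLinearGroup (Fin 2) L × Lˣ × Lˣ,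
      toTriple6 c' = act6 g (toTriple6 c)} ∧
  {g : Matrix.SpecialLinearGroup (Fin 2) L × Matrix.SpecialLinearGroup (Fin 2) L × Lˣ × Lˣ |
      act6 g (toTriple6 c) = toTriple6 c}.Finite

/-!
Write `Δ₆ = δ(α² - 4δ)²`, where `α` and `δ` are invariants of `G₆` of degrees 6 and 12. The factor
`α² - 4δ` appears because the discriminant of `F₁F₂` is built from the discriminant of a binary
quadratic form and its values at two points, and a product of such values is the square of the
polar form minus a multiple of the discriminant.

If `v` is stable, then no nontrivial one-parameter subgroup has only nonnegative weights on `v`: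
the limit would lie in the closed orbit, and the subgroup would stabilize it. Such subgroups
also force `Δ₆(v) = 0`. So if `v` is stable or `Δ₆(v) ≠ 0`, successive normalization never meets a
vanishing coefficient, and it moves `v` to the vector `YT² + δYU² + XW² + (X + αY)TU + ZUW`. Hence
on `Δ₆ ≠ 0` the orbits are the closed fibres of `(α, δ)`, with finite stabilizers, while for
`δ = 0` or `α² = 4δ` a unipotent element moves the normal form to an unstable vector. Stability is
therefore equivalent to `Δ₆ ≠ 0`, and the theorem follows by evaluating `Δ₆`.
-/

section BinaryForms

variable {R : Type*} [CommRing R]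

/-- The resultant of the binary quadratic forms `p X² + q XY + r Y²` and `u X² + v XY + w Y²`. -/
def quadResultant (p q r u v w : R) : R :=
  (p * w - r * u) ^ 2 - (p * v - q * u) * (q * w - r * v)

theorem disc4_mul (p q r u v w : R) :
    disc4 (p * u) (p * v + q * u) (p * w + q * v + r * u) (q * w + r * v) (r * w) =
      discrim p q r * discrim u v w * quadResultant p q r u v w ^ 2 := by
  simp only [disc4, discrim, quadResultant]
  ring

theorem disc4_mul_linear_mul_linear (p q r g h x y : R) :
    disc4 (p * g * x) (p * g * y + (q * g + p * h) * x)
        ((q * g + p * h) * y + (r * g + q * h) * x) ((r * g + q * h) * y + r * h * x)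
        (r * h * y) =
      discrim p q r * (g * y - h * x) ^ 2 *
        ((p * h ^ 2 - q * g * h + r * g ^ 2) * (p * y ^ 2 - q * x * y + r * x ^ 2)) ^ 2 := by
  have hdisc : discrim (g * x) (g * y + h * x) (h * y) = (g * y - h * x) ^ 2 := by
    simp only [discrim]
    ring
  have hres : quadResultant p q r (g * x) (g * y + h * x) (h * y) =
      (p * h ^ 2 - q * g * h + r * g ^ 2) * (p * y ^ 2 - q * x * y + r * x ^ 2) := by
    simp only [quadResultant]
    ring
  rw [← hdisc, ← hres, ← disc4_mul]
  ring_nf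

end BinaryForms

section Invariants

variable {R : Type*} [CommRing R]

/-- The coefficient of `X` in `F₂`, the polynomial function `β₅`. -/
def linX6 (c : Fin 10 → R) : R := -c 0 * c 9 ^ 2 - c 2 * c 8 ^ 2 + c 8 * c 6 * c 9

/-- The coefficient of `Y` in `F₂`, the polynomial function `β₆`. -/
def linY6 (c : Fin 10 → R) : R := -c 1 * c 9 ^ 2 - c 3 * c 8 ^ 2 + c 8 * c 7 * c 9

/-- The determinant of the linear forms `gX + hY` and `F₂`. -/
def linDet6 (c : Fin 10 → R) : R := c 4 * linY6 c - c 5 * linX6 c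

/-- The coefficient of `X²` in the quadratic form `4AB - C²`, where `A`, `B`, `C` are the
coefficients of `T²`, `U²`, `TU` in the first component of `v`. -/
def hessXX6 (c : Fin 10 → R) : R := 4 * c 0 * c 2 - c 6 ^ 2

/-- Half the coefficient of `XY` in the quadratic form `4AB - C²`; see `hessXX6`. -/
def hessXY6 (c : Fin 10 → R) : R := 2 * c 0 * c 3 + 2 * c 1 * c 2 - c 6 * c 7

/-- The coefficient of `Y²` in the quadratic form `4AB - C²`; see `hessXX6`. -/
def hessYY6 (c : Fin 10 → R) : R := 4 * c 1 * c 3 - c 7 ^ 2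

/-- The resultant of the quadratic forms `aT² + jTU + dU²` and `bT² + kTU + eU²`. -/
def res6 (c : Fin 10 → R) : R := quadResultant (c 0) (c 6) (c 2) (c 1) (c 7) (c 3)

/-- The invariant of degree 6 on `V₆`: up to sign, the polar form of `4AB - C²` at the zeros of
`gX + hY` and `F₂`. -/
def invAlpha6 (c : Fin 10 → R) : R :=
  hessXY6 c * (c 5 * linX6 c + c 4 * linY6 c) - hessXX6 c * (c 5 * linY6 c)
    - hessYY6 c * (c 4 * linX6 c)

/-- The invariant of degree 12 on `V₆`. -/
def invDelta6 (c : Fin 10 → R) : R := linDet6 c ^ 2 * res6 c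

/-- The discriminant of `V₆` in terms of the two generating invariants. -/
def disc6 (c : Fin 10 → R) : R := invDelta6 c * (invAlpha6 c ^ 2 - 4 * invDelta6 c) ^ 2

theorem discrim_hess6 (c : Fin 10 → R) :
    discrim (hessXX6 c) (2 * hessXY6 c) (hessYY6 c) = 16 * res6 c := by
  simp only [discrim, hessXX6, hessXY6, hessYY6, res6, quadResultant]
  ring

theorem hess6_mul_hess6_eq (c : Fin 10 → R) :
    (hessXX6 c * c 5 ^ 2 - 2 * hessXY6 c * c 4 * c 5 + hessYY6 c * c 4 ^ 2) *
        (hessXX6 c * linY6 c ^ 2 - 2 * hessXY6 c * linX6 c * linY6 c + hessYY6 c * linX6 c ^ 2) =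
      invAlpha6 c ^ 2 - 4 * invDelta6 c := by
  have hres : hessXY6 c ^ 2 - hessXX6 c * hessYY6 c = 4 * res6 c := by
    simp only [hessXX6, hessXY6, hessYY6, res6, quadResultant]
    ring
  simp only [invAlpha6, invDelta6, linDet6]
  linear_combination -(c 4 * linY6 c - c 5 * linX6 c) ^ 2 * hres

/-- The quartic discriminant of `F₁F₂` as a polynomial in the coordinates of `V₆`. -/
noncomputable def quarticDisc6 : MvPolynomial (Fin 10) ℤ :=
  disc4 (beta1 * beta5) (beta1 * beta6 + beta2 * beta5) (beta2 * beta6 + beta3 * beta5)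
    (beta3 * beta6 + beta4 * beta5) (beta4 * beta6)

theorem quarticDisc6_eq : quarticDisc6 = 16 * disc6 MvPolynomial.X := by
  have h1 : beta1 = hessXX6 MvPolynomial.X * MvPolynomial.X 4 := by
    simp only [beta1, hessXX6]
    ring
  have h2 : beta2 = 2 * hessXY6 MvPolynomial.X * MvPolynomial.X 4
      + hessXX6 MvPolynomial.X * MvPolynomial.X 5 := by
    simp only [beta2, hessXX6, hessXY6]
    ring
  have h3 : beta3 = hessYY6 MvPolynomial.X * MvPolynomial.X 4
      + 2 * hessXY6 MvPolynomial.X * MvPolynomial.X 5 := by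
    simp only [beta3, hessYY6, hessXY6]
    ring
  have h4 : beta4 = hessYY6 MvPolynomial.X * MvPolynomial.X 5 := by
    simp only [beta4, hessYY6]
    ring
  have h5 : beta5 = linX6 MvPolynomial.X := by simp only [beta5, linX6]
  have h6 : beta6 = linY6 MvPolynomial.X := by simp only [beta6, linY6]
  rw [quarticDisc6, h1, h2, h3, h4, h5, h6, disc4_mul_linear_mul_linear, discrim_hess6,
    hess6_mul_hess6_eq, disc6, invDelta6, linDet6]
  ring

theorem map_invAlpha6 {S : Type*} [CommRing S] (f : R →+* S) (c : Fin 10 → R) :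
    f (invAlpha6 c) = invAlpha6 (f ∘ c) := by
  simp [invAlpha6, hessXX6, hessXY6, hessYY6, linX6, linY6, map_ofNat f]

theorem map_invDelta6 {S : Type*} [CommRing S] (f : R →+* S) (c : Fin 10 → R) :
    f (invDelta6 c) = invDelta6 (f ∘ c) := by
  simp [invDelta6, linDet6, linX6, linY6, res6, quadResultant]

theorem map_disc6 {S : Type*} [CommRing S] (f : R →+* S) (c : Fin 10 → R) :
    f (disc6 c) = disc6 (f ∘ c) := by
  simp [disc6, map_invAlpha6, map_invDelta6, map_ofNat f]

theorem Delta6_eq_disc6 {Q : MvPolynomial (Fin 10) ℤ} (hQ : 16 * Q = quarticDisc6)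
    (c : Fin 10 → R) : Delta6 Q c = disc6 c := by
  have h16 : (16 : MvPolynomial (Fin 10) ℤ) ≠ 0 := by norm_num
  have hQ' : Q = disc6 MvPolynomial.X := mul_left_cancel₀ h16 (hQ.trans quarticDisc6_eq)
  calc Delta6 Q c = (MvPolynomial.aeval c : MvPolynomial (Fin 10) ℤ →ₐ[ℤ] R).toRingHom
          (disc6 MvPolynomial.X) := by rw [Delta6, hQ']; rfl
    _ = disc6 c := by
      rw [map_disc6]
      congr 1
      ext i
      exact MvPolynomial.aeval_X c i

theorem disc6_split_family (a d h j k r : R) :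
    disc6 ![a, 0, d, 0, 0, h, j, k, 0, r] =
      16 * a ^ 9 * d ^ 3 * h ^ 6 * k ^ 6 * r ^ 12
        - 8 * a ^ 8 * d ^ 2 * h ^ 6 * j ^ 2 * k ^ 6 * r ^ 12
        + a ^ 7 * d * h ^ 6 * j ^ 4 * k ^ 6 * r ^ 12 := by
  simp only [disc6, invAlpha6, invDelta6, hessXX6, hessXY6, hessYY6, linDet6, linX6, linY6, res6,
    quadResultant, Matrix.cons_val]
  ring

theorem disc6_dual_cyclic (b j e g r : R) :
    disc6 ![0, b, 0, e, g, 0, j, 0, 0, r] = 16 * b ^ 9 * e ^ 3 * g ^ 6 * j ^ 6 * r ^ 12 := by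
  simp only [disc6, invAlpha6, invDelta6, hessXX6, hessXY6, hessYY6, linDet6, linX6, linY6, res6,
    quadResultant, Matrix.cons_val]
  ring

end Invariants

section Action

open MulAction

variable {L : Type*} [Field L]

/-- The group `G₆`. -/
abbrev G6 (L : Type*) [Field L] : Type _ :=
  Matrix.SpecialLinearGroup (Fin 2) L × Matrix.SpecialLinearGroup (Fin 2) L × Lˣ × Lˣ

/-- The action of `G₆` on the coordinates of `V₆`. Substituting by `M` in `pX + qY` gives
`(x p q) X + (y p q) Y`. -/
def coordAct6 (γ : G6 L) (c : Fin 10 → L) : Fin 10 → L :=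
  let M := γ.1.1
  let N := γ.2.1.1
  let s : L := γ.2.2.1
  let t : L := γ.2.2.2
  let x (p q : L) := p * M 0 0 + q * M 1 0
  let y (p q : L) := p * M 0 1 + q * M 1 1
  ![s⁻¹ * (x (c 0) (c 1) * N 0 0 ^ 2 + x (c 6) (c 7) * (N 0 0 * N 1 0)
      + x (c 2) (c 3) * N 1 0 ^ 2),
    s⁻¹ * (y (c 0) (c 1) * N 0 0 ^ 2 + y (c 6) (c 7) * (N 0 0 * N 1 0)
      + y (c 2) (c 3) * N 1 0 ^ 2),
    s⁻¹ * (x (c 0) (c 1) * N 0 1 ^ 2 + x (c 6) (c 7) * (N 0 1 * N 1 1)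
      + x (c 2) (c 3) * N 1 1 ^ 2),
    s⁻¹ * (y (c 0) (c 1) * N 0 1 ^ 2 + y (c 6) (c 7) * (N 0 1 * N 1 1)
      + y (c 2) (c 3) * N 1 1 ^ 2),
    s ^ 3 * t ^ 2 * x (c 4) (c 5),
    s ^ 3 * t ^ 2 * y (c 4) (c 5),
    s⁻¹ * (2 * x (c 0) (c 1) * (N 0 0 * N 0 1) + x (c 6) (c 7) * (N 0 0 * N 1 1 + N 0 1 * N 1 0)
      + 2 * x (c 2) (c 3) * (N 1 0 * N 1 1)),
    s⁻¹ * (2 * y (c 0) (c 1) * (N 0 0 * N 0 1) + y (c 6) (c 7) * (N 0 0 * N 1 1 + N 0 1 * N 1 0)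
      + 2 * y (c 2) (c 3) * (N 1 0 * N 1 1)),
    t⁻¹ * (c 8 * N 0 0 + c 9 * N 1 0),
    t⁻¹ * (c 8 * N 0 1 + c 9 * N 1 1)]

theorem toTriple6_coordAct6 (γ : G6 L) (c : Fin 10 → L) :
    toTriple6 (coordAct6 γ c) = act6 γ (toTriple6 c) := by
  obtain ⟨M, N, s, t⟩ := γ
  refine Prod.ext ?_ (Prod.ext ?_ ?_) <;>
  · simp only [toTriple6, act6, sub6, coordAct6, MvPolynomial.smul_eq_C_mul, map_add, map_mul,
      map_pow, MvPolynomial.aeval_X, MvPolynomial.aeval_C, MvPolynomial.algebraMap_eq,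
      Sum.elim_inl, Sum.elim_inr, Fin.sum_univ_two, Matrix.cons_val, map_ofNat]
    ring

theorem toTriple6_injective : Function.Injective (toTriple6 (L := L)) := by
  intro c c' h
  let pt (x y t u : L) : Vars6 → L := Sum.elim (Sum.elim ![x, y] 1) (Sum.elim ![t, u] 1)
  have hval (x y t u : L) :
      let ev := MvPolynomial.eval (pt x y t u)
      ev (toTriple6 c).1 = ev (toTriple6 c').1 ∧ ev (toTriple6 c).2.1 = ev (toTriple6 c').2.1 ∧
        ev (toTriple6 c).2.2 = ev (toTriple6 c').2.2 := by
    rw [h]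
    exact ⟨rfl, rfl, rfl⟩
  simp only [toTriple6, map_add, map_mul, map_pow, MvPolynomial.eval_X, MvPolynomial.eval_C,
    pt, Sum.elim_inl, Sum.elim_inr, Matrix.cons_val, Pi.one_apply] at hval
  have h₁ := hval 1 0 1 0
  have h₂ := hval 1 0 0 1
  have h₃ := hval 0 1 1 0
  have h₄ := hval 0 1 0 1
  have h₅ := hval 1 0 1 1
  have h₆ := hval 0 1 1 1
  ext i
  fin_cases i <;> simp only [Fin.reduceFinMk] <;> grind

theorem coordAct6_one (c : Fin 10 → L) : coordAct6 1 c = c := by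
  ext i
  fin_cases i <;> simp [coordAct6]

theorem coordAct6_coordAct6 (γ η : G6 L) (c : Fin 10 → L) :
    coordAct6 γ (coordAct6 η c) = coordAct6 (η * γ) c := by
  obtain ⟨M, N, s, t⟩ := γ
  obtain ⟨M', N', s', t'⟩ := η
  simp only [coordAct6, Prod.mk_mul_mk, Matrix.SpecialLinearGroup.coe_mul, Matrix.mul_apply,
    Fin.sum_univ_two, Units.val_mul, mul_inv, Matrix.cons_val, Matrix.vecCons_inj, and_true]
  refine ⟨?_, ?_, ?_, ?_, ?_, ?_, ?_, ?_, ?_, ?_⟩ <;> ring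

/-- Substitution is a right action, hence an action of the opposite group. -/
instance : MulAction (G6 L)ᵐᵒᵖ (Fin 10 → L) where
  smul γ := coordAct6 γ.unop
  one_smul := coordAct6_one
  mul_smul γ η c := (coordAct6_coordAct6 γ.unop η.unop c).symm

theorem coordAct6_mem_orbit (γ : G6 L) (c : Fin 10 → L) :
    coordAct6 γ c ∈ orbit (G6 L)ᵐᵒᵖ c :=
  mem_orbit c (MulOpposite.op γ)

theorem mem_orbit6_iff {c c' : Fin 10 → L} :
    c' ∈ orbit (G6 L)ᵐᵒᵖ c ↔ ∃ γ, c' = coordAct6 γ c := by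
  constructor
  · rintro ⟨γ, rfl⟩
    exact ⟨γ.unop, rfl⟩
  · rintro ⟨γ, rfl⟩
    exact coordAct6_mem_orbit γ c

theorem stable6_iff {c : Fin 10 → L} :
    Stable6 c ↔ IsZariskiClosed (orbit (G6 L)ᵐᵒᵖ c) ∧ Finite (stabilizer (G6 L)ᵐᵒᵖ c) := by
  simp only [Stable6, ← toTriple6_coordAct6, toTriple6_injective.eq_iff]
  refine and_congr (iff_of_eq <| congrArg _ <| Set.ext fun c' => mem_orbit6_iff.symm) ?_
  exact Equiv.finite_iff (α := {γ | coordAct6 γ c = c})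
    (MulOpposite.opEquiv.subtypeEquiv fun _ => Iff.rfl)

theorem stable6_iff_of_mem_orbit {c c' : Fin 10 → L} (h : c' ∈ orbit (G6 L)ᵐᵒᵖ c) :
    Stable6 c' ↔ Stable6 c := by
  rw [stable6_iff, stable6_iff, orbit_eq_iff.2 h,
    (stabilizerEquivStabilizerOfOrbitRel (orbitRel_apply.2 h)).toEquiv.finite_iff]

end Action

section Invariance

open MulAction

variable {L : Type*} [Field L]

theorem eq_of_eq_mul_pow {M : Type*} [Monoid M] {x y d : M} (hd : d = 1) (n : ℕ)
    (h : x = y * d ^ n) : x = y := by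
  rw [h, hd, one_pow, mul_one]

theorem specialLinearGroup_fin_two_det (M : Matrix.SpecialLinearGroup (Fin 2) L) :
    M.1 0 0 * M.1 1 1 - M.1 0 1 * M.1 1 0 = 1 := by
  rw [← Matrix.det_fin_two, M.2]

variable (M N : Matrix.SpecialLinearGroup (Fin 2) L) (s t : Lˣ) (c : Fin 10 → L)

theorem linX6_coordAct6 : linX6 (coordAct6 (M, N, s, t) c) =
    (s : L)⁻¹ * (t : L)⁻¹ ^ 2 * (linX6 c * M.1 0 0 + linY6 c * M.1 1 0) := by
  refine eq_of_eq_mul_pow (specialLinearGroup_fin_two_det N) 2 ?_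
  simp only [linX6, linY6, coordAct6, Matrix.cons_val]
  ring

theorem linY6_coordAct6 : linY6 (coordAct6 (M, N, s, t) c) =
    (s : L)⁻¹ * (t : L)⁻¹ ^ 2 * (linX6 c * M.1 0 1 + linY6 c * M.1 1 1) := by
  refine eq_of_eq_mul_pow (specialLinearGroup_fin_two_det N) 2 ?_
  simp only [linX6, linY6, coordAct6, Matrix.cons_val]
  ring

theorem linDet6_coordAct6 : linDet6 (coordAct6 (M, N, s, t) c) = (s : L) ^ 2 * linDet6 c := by
  refine eq_of_eq_mul_pow (specialLinearGroup_fin_two_det M) 1 ?_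
  rw [linDet6, linX6_coordAct6, linY6_coordAct6]
  simp only [linDet6, coordAct6, Matrix.cons_val]
  field_simp
  ring

theorem res6_coordAct6 : res6 (coordAct6 (M, N, s, t) c) = (s : L)⁻¹ ^ 4 * res6 c := by
  refine eq_of_eq_mul_pow (specialLinearGroup_fin_two_det M) 2
    (eq_of_eq_mul_pow (specialLinearGroup_fin_two_det N) 4 ?_)
  simp only [res6, quadResultant, coordAct6, Matrix.cons_val]
  ring

theorem hessXX6_coordAct6 : hessXX6 (coordAct6 (M, N, s, t) c) =
    (s : L)⁻¹ ^ 2 * (hessXX6 c * M.1 0 0 ^ 2 + 2 * hessXY6 c * (M.1 0 0 * M.1 1 0)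
      + hessYY6 c * M.1 1 0 ^ 2) := by
  refine eq_of_eq_mul_pow (specialLinearGroup_fin_two_det N) 2 ?_
  simp only [hessXX6, hessXY6, hessYY6, coordAct6, Matrix.cons_val]
  ring

theorem hessXY6_coordAct6 : hessXY6 (coordAct6 (M, N, s, t) c) =
    (s : L)⁻¹ ^ 2 * (hessXX6 c * (M.1 0 0 * M.1 0 1)
      + hessXY6 c * (M.1 0 0 * M.1 1 1 + M.1 0 1 * M.1 1 0)
      + hessYY6 c * (M.1 1 0 * M.1 1 1)) := by
  refine eq_of_eq_mul_pow (specialLinearGroup_fin_two_det N) 2 ?_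
  simp only [hessXX6, hessXY6, hessYY6, coordAct6, Matrix.cons_val]
  ring

theorem hessYY6_coordAct6 : hessYY6 (coordAct6 (M, N, s, t) c) =
    (s : L)⁻¹ ^ 2 * (hessXX6 c * M.1 0 1 ^ 2 + 2 * hessXY6 c * (M.1 0 1 * M.1 1 1)
      + hessYY6 c * M.1 1 1 ^ 2) := by
  refine eq_of_eq_mul_pow (specialLinearGroup_fin_two_det N) 2 ?_
  simp only [hessXX6, hessXY6, hessYY6, coordAct6, Matrix.cons_val]
  ring

theorem invAlpha6_coordAct6 : invAlpha6 (coordAct6 (M, N, s, t) c) = invAlpha6 c := by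
  refine eq_of_eq_mul_pow (specialLinearGroup_fin_two_det M) 2 ?_
  rw [invAlpha6, linX6_coordAct6, linY6_coordAct6, hessXX6_coordAct6, hessXY6_coordAct6,
    hessYY6_coordAct6]
  simp only [invAlpha6, coordAct6, Matrix.cons_val]
  field_simp
  ring

theorem invDelta6_coordAct6 : invDelta6 (coordAct6 (M, N, s, t) c) = invDelta6 c := by
  rw [invDelta6, linDet6_coordAct6, res6_coordAct6, invDelta6]
  field_simp

variable {c} {c' : Fin 10 → L}

theorem invAlpha6_eq_of_mem_orbit (h : c' ∈ orbit (G6 L)ᵐᵒᵖ c) : invAlpha6 c' = invAlpha6 c := by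
  obtain ⟨⟨M, N, s, t⟩, rfl⟩ := mem_orbit6_iff.1 h
  exact invAlpha6_coordAct6 M N s t c

theorem invDelta6_eq_of_mem_orbit (h : c' ∈ orbit (G6 L)ᵐᵒᵖ c) : invDelta6 c' = invDelta6 c := by
  obtain ⟨⟨M, N, s, t⟩, rfl⟩ := mem_orbit6_iff.1 h
  exact invDelta6_coordAct6 M N s t c

theorem disc6_eq_of_mem_orbit (h : c' ∈ orbit (G6 L)ᵐᵒᵖ c) : disc6 c' = disc6 c := by
  rw [disc6, invAlpha6_eq_of_mem_orbit h, invDelta6_eq_of_mem_orbit h, disc6]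

end Invariance

section ZariskiClosed

variable {n : ℕ} {L : Type*} [Field L]

theorem isZariskiClosed_setOf_eval_eq (f : MvPolynomial (Fin n) L) (a : L) :
    IsZariskiClosed {x | MvPolynomial.eval x f = a} :=
  ⟨{f - MvPolynomial.C a}, by simp [sub_eq_zero]⟩

theorem IsZariskiClosed.inter {s t : Set (Fin n → L)} (hs : IsZariskiClosed s)
    (ht : IsZariskiClosed t) : IsZariskiClosed (s ∩ t) := by
  obtain ⟨P, rfl⟩ := hs
  obtain ⟨P', rfl⟩ := ht
  refine ⟨P ∪ P', ?_⟩
  ext x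
  simp only [Set.mem_inter_iff, Set.mem_ofPred_eq, Set.mem_union, or_imp, forall_and]

theorem IsZariskiClosed.eval_mem [Infinite L] {s : Set (Fin n → L)} (hs : IsZariskiClosed s)
    (q : Fin n → Polynomial L) {x : L} (h : ∀ l ≠ x, (fun i => (q i).eval l) ∈ s) :
    (fun i => (q i).eval x) ∈ s := by
  obtain ⟨P, rfl⟩ := hs
  intro f hf
  have heval (l : L) : (MvPolynomial.aeval q f).eval l =
      MvPolynomial.eval (fun i => (q i).eval l) f := by
    rw [← Polynomial.coe_aeval_eq_eval, MvPolynomial.comp_aeval_apply,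
      MvPolynomial.aeval_eq_eval, Polynomial.coe_aeval_eq_eval]
  have hzero : MvPolynomial.aeval q f = 0 := by
    refine Polynomial.eq_zero_of_infinite_isRoot _ ((Set.finite_singleton x).infinite_compl.mono ?_)
    intro l hl
    exact (heval l).trans (h l hl f hf)
  rw [← heval, hzero, Polynomial.eval_zero]

end ZariskiClosed

section OneParameterSubgroups

open MulAction

variable {L : Type*} [Field L]

/-- An element of the diagonal maximal torus of `G₆`. -/
noncomputable def torus6 (x y s t : Lˣ) : G6 L :=
  (Matrix.SpecialLinearGroup.diag2 (x : L) x.ne_zero,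
    Matrix.SpecialLinearGroup.diag2 (y : L) y.ne_zero, s, t)

theorem coordAct6_torus6 (x y s t : Lˣ) (c : Fin 10 → L) :
    coordAct6 (torus6 x y s t) c = fun i =>
      (![x * y ^ 2 / s, x⁻¹ * y ^ 2 / s, x * y⁻¹ ^ 2 / s, x⁻¹ * y⁻¹ ^ 2 / s, x * s ^ 3 * t ^ 2,
        x⁻¹ * s ^ 3 * t ^ 2, x / s, x⁻¹ / s, y / t, y⁻¹ / t] i : Lˣ) * c i := by
  ext i
  fin_cases i <;>
    simp [coordAct6, torus6, Matrix.SpecialLinearGroup.diag2_coe'] <;> field_simp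

/-- The one-parameter subgroup of the diagonal torus of `G₆` with exponents `m`, `n`, `σ`, `τ`. -/
noncomputable def oneParam6 (m n σ τ : ℤ) (l : Lˣ) : G6 L :=
  torus6 (l ^ m) (l ^ n) (l ^ σ) (l ^ τ)

/-- The weights of the one-parameter subgroup `oneParam6 m n σ τ` on the coordinates of `V₆`. -/
def weight6 (m n σ τ : ℤ) : Fin 10 → ℤ :=
  ![m + 2 * n - σ, -m + 2 * n - σ, m - 2 * n - σ, -m - 2 * n - σ, m + 3 * σ + 2 * τ,
    -m + 3 * σ + 2 * τ, m - σ, -m - σ, n - τ, -n - τ]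

theorem coordAct6_oneParam6 (m n σ τ : ℤ) (l : Lˣ) (c : Fin 10 → L) :
    coordAct6 (oneParam6 m n σ τ l) c = fun i => ((l : L) ^ weight6 m n σ τ i) * c i := by
  rw [oneParam6, coordAct6_torus6]
  ext i
  congr 1
  rw [← Units.val_zpow_eq_zpow_val, Units.val_inj]
  fin_cases i <;>
    simp [weight6, zpow_add, zpow_sub, zpow_mul, div_eq_mul_inv, mul_comm]

theorem exists_zpow_ne_one [Infinite L] {k : ℤ} (hk : k ≠ 0) : ∃ l : Lˣ, l ^ k ≠ 1 := by
  classical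
  obtain ⟨x, hx⟩ :=
    Infinite.exists_notMem_finset (insert 0 (Polynomial.nthRootsFinset k.natAbs (1 : L)))
  rw [Finset.mem_insert, Polynomial.mem_nthRootsFinset (Int.natAbs_pos.2 hk), not_or] at hx
  refine ⟨Units.mk0 x hx.1, fun h => hx.2 ?_⟩
  simpa using congrArg Units.val (pow_natAbs_eq_one.2 h)

theorem not_finite_stabilizer6 [Infinite L] {m n σ τ : ℤ} (hτ : τ ≠ 0) {c : Fin 10 → L}
    (h : ∀ l, coordAct6 (oneParam6 m n σ τ l) c = c) : ¬Finite (stabilizer (G6 L)ᵐᵒᵖ c) := by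
  intro hfin
  obtain ⟨l, hl⟩ := exists_zpow_ne_one (L := L)
    (mul_ne_zero hτ (Nat.cast_ne_zero.2 (Nat.card_pos (α := stabilizer (G6 L)ᵐᵒᵖ c)).ne'))
  let γ : stabilizer (G6 L)ᵐᵒᵖ c := ⟨MulOpposite.op (oneParam6 m n σ τ l), h l⟩
  have hγ := congrArg (fun η : stabilizer (G6 L)ᵐᵒᵖ c => η.1.unop.2.2.2) (pow_card_eq_one' (x := γ))
  refine hl ?_
  simpa [γ, oneParam6, torus6, zpow_mul] using hγ

theorem not_stable6_of_weight6 [Infinite L] {m n σ τ : ℤ} (hτ : τ ≠ 0) {c : Fin 10 → L}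
    (h : ∀ i, c i = 0 ∨ 0 ≤ weight6 m n σ τ i) : ¬Stable6 c := by
  intro hc
  let w := weight6 m n σ τ
  let q : Fin 10 → Polynomial L := fun i => Polynomial.C (c i) * Polynomial.X ^ (w i).toNat
  have hlim : (fun i => (q i).eval 0) ∈ orbit (G6 L)ᵐᵒᵖ c := by
    refine (stable6_iff.1 hc).1.eval_mem q fun l hl => ?_
    convert coordAct6_mem_orbit (oneParam6 m n σ τ (Units.mk0 l hl)) c using 1
    rw [coordAct6_oneParam6]
    ext i
    rcases h i with hi | hi
    · simp [q, hi]
    · simp only [q, w, Polynomial.eval_mul, Polynomial.eval_C, Polynomial.eval_pow,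
        Polynomial.eval_X]
      rw [mul_comm, ← zpow_natCast, Int.toNat_of_nonneg hi, Units.val_mk0]
  refine not_finite_stabilizer6 hτ (m := m) (n := n) (σ := σ) (fun l => ?_)
    (stable6_iff.1 ((stable6_iff_of_mem_orbit hlim).2 hc)).2
  rw [coordAct6_oneParam6]
  ext i
  rcases h i with hi | hi
  · simp [q, hi]
  · rcases hi.eq_or_lt with hi | hi
    · simp [q, w, ← hi]
    · have hpos : (weight6 m n σ τ i).toNat ≠ 0 := by lia
      simp [q, w, hpos]

end OneParameterSubgroups

section Slice

open MulAction

/-- The vector `YT² + δYU² + XW² + (X + αY)TU + ZUW`. These vectors form a slice to the action of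
`G₆`: `α` and `δ` are the values of the two invariants. -/
def slice6 {R : Type*} [CommRing R] (α δ : R) : Fin 10 → R :=
  ![0, 1, 0, δ, 1, 0, 1, α, 0, 1]

theorem invAlpha6_slice6 {R : Type*} [CommRing R] (α δ : R) : invAlpha6 (slice6 α δ) = α := by
  simp [invAlpha6, slice6, hessXX6, hessXY6, linX6, linY6]

theorem invDelta6_slice6 {R : Type*} [CommRing R] (α δ : R) : invDelta6 (slice6 α δ) = δ := by
  simp [invDelta6, slice6, linDet6, linX6, linY6, res6, quadResultant]

variable {L : Type*} [Field L]

/-- The pair of upper unitriangular matrices with entries `u` and `v`, as an element of `G₆`. -/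
def unipotent6 (u v : L) : G6 L :=
  (.transvection zero_ne_one u, .transvection zero_ne_one v, 1, 1)

theorem coordAct6_unipotent6 (u v : L) (c : Fin 10 → L) :
    coordAct6 (unipotent6 u v) c =
      ![c 0, c 1 + u * c 0, c 2 + v * c 6 + v ^ 2 * c 0,
        c 3 + u * c 2 + v * (c 7 + u * c 6) + v ^ 2 * (c 1 + u * c 0), c 4, c 5 + u * c 4,
        c 6 + 2 * v * c 0, c 7 + u * c 6 + 2 * v * (c 1 + u * c 0), c 8, c 9 + v * c 8] := by
  ext i
  fin_cases i <;>
    simp [coordAct6, unipotent6, Matrix.SpecialLinearGroup.transvection_coe] <;> ring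

theorem exists_vecMul_specialLinearGroup {x y : L} (h : x ≠ 0 ∨ y ≠ 0) :
    ∃ M : Matrix.SpecialLinearGroup (Fin 2) L,
      x * M.1 0 0 + y * M.1 1 0 = 0 ∧ x * M.1 0 1 + y * M.1 1 1 = 1 := by
  obtain ⟨A, rfl, rfl⟩ := (Semifield.isCoprime_iff.2 h).exists_SL2_row 1
  have hA : A.1 * (A⁻¹).1 = 1 := congrArg Subtype.val (mul_inv_cancel A)
  refine ⟨A⁻¹, ?_, ?_⟩
  · simpa [Matrix.mul_apply] using congrFun₂ hA 1 0
  · simpa [Matrix.mul_apply] using congrFun₂ hA 1 1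

/-- The vectors that can be moved into the slice: those with nonzero discriminant, but also
the stable ones. -/
def Nondegenerate6 (c : Fin 10 → L) : Prop :=
  Stable6 c ∨ disc6 c ≠ 0

theorem Nondegenerate6.of_mem_orbit {c c' : Fin 10 → L} (hc : Nondegenerate6 c)
    (h : c' ∈ orbit (G6 L)ᵐᵒᵖ c) : Nondegenerate6 c' := by
  rwa [Nondegenerate6, stable6_iff_of_mem_orbit h, disc6_eq_of_mem_orbit h]

theorem Nondegenerate6.exists_weight6_neg [Infinite L] {c : Fin 10 → L} (hc : Nondegenerate6 c)
    (hdisc : disc6 c = 0) {m n σ τ : ℤ} (hτ : τ ≠ 0) :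
    ∃ i, c i ≠ 0 ∧ weight6 m n σ τ i < 0 := by
  by_contra! h
  exact not_stable6_of_weight6 hτ (fun i => or_iff_not_imp_left.2 (h i))
    (hc.resolve_right (not_not_intro hdisc))

theorem Nondegenerate6.exists_mem_orbit_linear [Infinite L] {c : Fin 10 → L}
    (hc : Nondegenerate6 c) : ∃ c' ∈ orbit (G6 L)ᵐᵒᵖ c, c' 8 = 0 ∧ c' 9 = 1 := by
  have h89 : c 8 ≠ 0 ∨ c 9 ≠ 0 := by
    by_contra! h
    obtain ⟨i, hi, hw⟩ := hc.exists_weight6_neg (m := 0) (n := 0) (σ := 0) (τ := 1)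
      (by simp [disc6, invDelta6, linDet6, linX6, linY6, h]) one_ne_zero
    fin_cases i <;> simp_all [weight6]
  obtain ⟨N, h8, h9⟩ := exists_vecMul_specialLinearGroup h89
  refine ⟨_, coordAct6_mem_orbit (1, N, 1, 1) c, ?_, ?_⟩
  · simpa [coordAct6] using h8
  · simpa [coordAct6] using h9

theorem Nondegenerate6.exists_mem_orbit_square [Infinite L] {c : Fin 10 → L}
    (hc : Nondegenerate6 c) (h8 : c 8 = 0) (h9 : c 9 = 1) :
    ∃ c' ∈ orbit (G6 L)ᵐᵒᵖ c, c' 0 = 0 ∧ c' 1 = 1 ∧ c' 8 = 0 ∧ c' 9 = 1 := by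
  have h01 : c 0 ≠ 0 ∨ c 1 ≠ 0 := by
    by_contra! h
    obtain ⟨i, hi, hw⟩ := hc.exists_weight6_neg (m := 0) (n := -1) (σ := 0) (τ := 1)
      (by simp [disc6, invDelta6, linDet6, linX6, linY6, h, h8]) one_ne_zero
    fin_cases i <;> simp_all [weight6]
  obtain ⟨M, h0, h1⟩ := exists_vecMul_specialLinearGroup h01
  refine ⟨_, coordAct6_mem_orbit (M, 1, 1, 1) c, ?_, ?_, ?_, ?_⟩
  · simpa [coordAct6] using h0
  · simpa [coordAct6] using h1
  · simp [coordAct6, h8]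
  · simp [coordAct6, h9]

theorem Nondegenerate6.exists_mem_orbit_unipotent [Infinite L] {c : Fin 10 → L}
    (hc : Nondegenerate6 c) (h0 : c 0 = 0) (h1 : c 1 = 1) (h8 : c 8 = 0) (h9 : c 9 = 1) :
    ∃ e g j k : L, g ≠ 0 ∧ j ≠ 0 ∧ ![0, 1, 0, e, g, 0, j, k, 0, 1] ∈ orbit (G6 L)ᵐᵒᵖ c := by
  have h4 : c 4 ≠ 0 := by
    intro h4
    obtain ⟨i, hi, hw⟩ := hc.exists_weight6_neg (m := -1) (n := -1) (σ := -1) (τ := 1)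
      (by simp [disc6, invDelta6, linDet6, linX6, h0, h4, h8]) one_ne_zero
    fin_cases i <;> simp_all [weight6]
  let u := -c 5 / c 4
  let c' := coordAct6 (unipotent6 u 0) c
  have hc' : c' = ![0, 1, c 2, c 3 + u * c 2, c 4, 0, c 6, c 7 + u * c 6, 0, 1] := by
    simp [c', u, coordAct6_unipotent6, h0, h1, h8, h9, h4]
  have hmem : c' ∈ orbit (G6 L)ᵐᵒᵖ c := coordAct6_mem_orbit _ c
  have h6 : c 6 ≠ 0 := by
    intro h6
    have hdisc : disc6 c' = 0 := by
      rw [disc6, ← hess6_mul_hess6_eq]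
      simp [hessXX6, linX6, hc', h6]
    obtain ⟨i, hi, hw⟩ := (hc.of_mem_orbit hmem).exists_weight6_neg
      (m := -2) (n := -1) (σ := 0) (τ := 1) hdisc one_ne_zero
    rw [hc'] at hi
    fin_cases i <;> simp_all [weight6]
  have hmem' := coordAct6_mem_orbit (unipotent6 0 (-c 2 / c 6)) c'
  rw [orbit_eq_iff.2 hmem, coordAct6_unipotent6, hc'] at hmem'
  exact ⟨_, c 4, c 6, _, h4, h6, by simpa [h6] using hmem'⟩

theorem exists_slice6_mem_orbit (hL : ∀ x : L, IsSquare x) (e k : L) {g j : L} (hg : g ≠ 0)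
    (hj : j ≠ 0) :
    ∃ α δ : L, slice6 α δ ∈ orbit (G6 L)ᵐᵒᵖ ![0, 1, 0, e, g, 0, j, k, 0, 1] := by
  obtain ⟨γ, rfl⟩ := hL g
  obtain ⟨η, rfl⟩ := hL j
  lift γ to Lˣ using (left_ne_zero_of_mul hg).isUnit
  lift η to Lˣ using (left_ne_zero_of_mul hj).isUnit
  let x : Lˣ := (η ^ 2 * γ)⁻¹
  let c := coordAct6 (torus6 x (x * η) γ⁻¹ (x * η)⁻¹) ![0, 1, 0, e, γ * γ, 0, η * η, k, 0, 1]
  refine ⟨c 7, c 3, ?_⟩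
  convert coordAct6_mem_orbit (torus6 x (x * η) γ⁻¹ (x * η)⁻¹) _ using 1
  ext i
  fin_cases i <;> simp [slice6, c, x, coordAct6_torus6] <;> field_simp

theorem Nondegenerate6.slice6_mem_orbit [Infinite L] (hL : ∀ x : L, IsSquare x)
    {c : Fin 10 → L} (hc : Nondegenerate6 c) :
    slice6 (invAlpha6 c) (invDelta6 c) ∈ orbit (G6 L)ᵐᵒᵖ c := by
  obtain ⟨c₁, hc₁, h8, h9⟩ := hc.exists_mem_orbit_linear
  obtain ⟨c₂, hc₂, h0, h1, h8', h9'⟩ := (hc.of_mem_orbit hc₁).exists_mem_orbit_square h8 h9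
  rw [orbit_eq_iff.2 hc₁] at hc₂
  obtain ⟨e, g, j, k, hg, hj, hc₃⟩ :=
    (hc.of_mem_orbit hc₂).exists_mem_orbit_unipotent h0 h1 h8' h9'
  rw [orbit_eq_iff.2 hc₂] at hc₃
  obtain ⟨α, δ, h⟩ := exists_slice6_mem_orbit hL e k hg hj
  rw [orbit_eq_iff.2 hc₃] at h
  rwa [← invAlpha6_eq_of_mem_orbit h, ← invDelta6_eq_of_mem_orbit h, invAlpha6_slice6,
    invDelta6_slice6]

end Slice

section Criterion

open MulAction

variable {L : Type*} [Field L]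

theorem exists_eq_diag2 {M : Matrix.SpecialLinearGroup (Fin 2) L} (h01 : M.1 0 1 = 0)
    (h10 : M.1 1 0 = 0) :
    ∃ x : Lˣ, M = Matrix.SpecialLinearGroup.diag2 (x : L) x.ne_zero := by
  have hdet : M.1 0 0 * M.1 1 1 = 1 := by simpa [h01] using specialLinearGroup_fin_two_det M
  refine ⟨Units.mkOfMulEqOne _ _ hdet, Subtype.ext (Matrix.ext fun i j => ?_)⟩
  fin_cases i <;> fin_cases j <;>
    simp [Matrix.SpecialLinearGroup.diag2_coe', h01, h10, eq_inv_of_mul_eq_one_right hdet]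

theorem exists_eq_torus6_of_coordAct6_slice6 {α δ : L} {γ : G6 L}
    (h : coordAct6 γ (slice6 α δ) = slice6 α δ) : ∃ x y s t, γ = torus6 x y s t := by
  obtain ⟨M, N, s, t⟩ := γ
  have hM := specialLinearGroup_fin_two_det M
  have hN := specialLinearGroup_fin_two_det N
  simp only [slice6, coordAct6, Matrix.cons_val, Matrix.vecCons_inj, and_true] at h
  obtain ⟨h0, -, h2, -, -, h5, -, -, h8, -⟩ := h
  have hN10 : N.1 1 0 = 0 := by simpa using h8
  have hM01 : M.1 0 1 = 0 := by simpa using h5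
  have hN00 : N.1 0 0 ≠ 0 := fun h => by simp [hN10, h] at hN
  have hN11 : N.1 1 1 ≠ 0 := fun h => by simp [hN10, h] at hN
  have hM00 : M.1 0 0 ≠ 0 := fun h => by simp [hM01, h] at hM
  have hM10 : M.1 1 0 = 0 := by simpa [hN10, hN00] using h0
  have hN01 : N.1 0 1 = 0 := by simpa [hM10, hM00, hN11] using h2
  obtain ⟨x, rfl⟩ := exists_eq_diag2 hM01 hM10
  obtain ⟨y, rfl⟩ := exists_eq_diag2 hN01 hN10
  exact ⟨x, y, s, t, rfl⟩

theorem torus6_eq_of_coordAct6_slice6 {α δ : L} {x y s t : Lˣ}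
    (h : coordAct6 (torus6 x y s t) (slice6 α δ) = slice6 α δ) :
    x = s ∧ y = t ∧ s ^ 2 = 1 ∧ t ^ 2 = 1 := by
  rw [coordAct6_torus6] at h
  have h1 : x⁻¹ * y ^ 2 / s = 1 := Units.ext (by simpa [slice6] using congrFun h 1)
  have h4 : x * s ^ 3 * t ^ 2 = 1 := Units.ext (by simpa [slice6] using congrFun h 4)
  have h6 : x / s = 1 := Units.ext (by simpa [slice6] using congrFun h 6)
  have h9 : y⁻¹ / t = 1 := Units.ext (by simpa [slice6] using congrFun h 9)
  obtain rfl : x = s := div_eq_one.1 h6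
  obtain rfl : y⁻¹ = t := div_eq_one.1 h9
  have hxy : y ^ 2 = x ^ 2 := by
    rwa [div_eq_one, inv_mul_eq_iff_eq_mul, ← sq] at h1
  have hx : x ^ 2 = 1 := by
    rwa [inv_pow, hxy, mul_inv_eq_one, ← pow_succ', pow_mul x 2 2, sq (x ^ 2), mul_eq_left] at h4
  have hy : y ^ 2 = 1 := hxy.trans hx
  exact ⟨rfl, eq_inv_of_mul_eq_one_left (sq y ▸ hy), hx, by rw [inv_pow, hy, inv_one]⟩

theorem finite_stabilizer_slice6 (α δ : L) : Finite (stabilizer (G6 L)ᵐᵒᵖ (slice6 α δ)) := by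
  have : Finite (rootsOfUnity 2 L) := inferInstance
  have hroots : (rootsOfUnity 2 L : Set Lˣ).Finite := Set.toFinite _
  let f (u : Lˣ × Lˣ) : (G6 L)ᵐᵒᵖ := .op (torus6 u.1 u.2 u.1 u.2)
  refine ((hroots.prod hroots).image f).subset fun γ hγ => ?_
  obtain ⟨x, y, s, t, h⟩ := exists_eq_torus6_of_coordAct6_slice6 (γ := γ.unop) hγ
  have hfix : coordAct6 (torus6 x y s t) (slice6 α δ) = slice6 α δ := h ▸ hγ
  obtain ⟨rfl, rfl, hx, hy⟩ := torus6_eq_of_coordAct6_slice6 hfix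
  exact ⟨(x, y), ⟨hx, hy⟩, congrArg MulOpposite.op h.symm⟩

theorem not_stable6_slice6_zero [Infinite L] (α : L) : ¬Stable6 (slice6 α 0) := by
  rw [← stable6_iff_of_mem_orbit (coordAct6_mem_orbit (unipotent6 (-α) 0) _),
    coordAct6_unipotent6]
  refine not_stable6_of_weight6 (m := 1) (n := 1) (σ := 1) (τ := -1) (by decide) fun i => ?_
  fin_cases i <;> simp [slice6, weight6]

theorem not_stable6_slice6_sq [Infinite L] (x : L) : ¬Stable6 (slice6 (2 * x) (x ^ 2)) := by
  rw [← stable6_iff_of_mem_orbit (coordAct6_mem_orbit (unipotent6 0 (-x)) _),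
    coordAct6_unipotent6]
  refine not_stable6_of_weight6 (m := 2) (n := 1) (σ := 0) (τ := -1) (by decide) fun i => ?_
  fin_cases i <;> simp [slice6, weight6]
  ring

theorem not_stable6_slice6_of_sq_eq [Infinite L] (hL : ∀ x : L, IsSquare x) {α δ : L}
    (h : α ^ 2 = 4 * δ) : ¬Stable6 (slice6 α δ) := by
  obtain ⟨x, rfl⟩ := hL δ
  have hα : α ^ 2 = (2 * x) ^ 2 := by linear_combination h
  rcases sq_eq_sq_iff_eq_or_eq_neg.1 hα with rfl | rfl
  · simpa [sq] using not_stable6_slice6_sq x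
  · simpa [sq] using not_stable6_slice6_sq (-x)

theorem orbit6_eq_of_disc6_ne_zero [Infinite L] (hL : ∀ x : L, IsSquare x) {c : Fin 10 → L}
    (hc : disc6 c ≠ 0) : orbit (G6 L)ᵐᵒᵖ c =
      {c' | invAlpha6 c' = invAlpha6 c} ∩ {c' | invDelta6 c' = invDelta6 c} := by
  ext c'
  refine ⟨fun h => ⟨invAlpha6_eq_of_mem_orbit h, invDelta6_eq_of_mem_orbit h⟩, ?_⟩
  rintro ⟨hα : invAlpha6 c' = _, hδ : invDelta6 c' = _⟩
  have hc' : disc6 c' ≠ 0 := by rwa [disc6, hα, hδ]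
  have hslice := Nondegenerate6.slice6_mem_orbit hL (Or.inr hc')
  rw [hα, hδ] at hslice
  rw [← orbit_eq_iff.2 (Nondegenerate6.slice6_mem_orbit hL (Or.inr hc))]
  exact mem_orbit_symm.1 hslice

theorem isZariskiClosed_orbit6 [Infinite L] (hL : ∀ x : L, IsSquare x) {c : Fin 10 → L}
    (hc : disc6 c ≠ 0) : IsZariskiClosed (orbit (G6 L)ᵐᵒᵖ c) := by
  have hX (c' : Fin 10 → L) : MvPolynomial.eval c' ∘ MvPolynomial.X = c' :=
    funext (MvPolynomial.eval_X (f := c'))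
  rw [orbit6_eq_of_disc6_ne_zero hL hc]
  convert (isZariskiClosed_setOf_eval_eq (invAlpha6 MvPolynomial.X) (invAlpha6 c)).inter
    (isZariskiClosed_setOf_eval_eq (invDelta6 MvPolynomial.X) (invDelta6 c)) using 5
  · rw [map_invAlpha6, hX]
  · rw [map_invDelta6, hX]

theorem stable6_iff_disc6_ne_zero [Infinite L] (hL : ∀ x : L, IsSquare x) (c : Fin 10 → L) :
    Stable6 c ↔ disc6 c ≠ 0 := by
  refine ⟨fun hc hdisc => ?_, fun hc => ?_⟩
  · have hslice := Nondegenerate6.slice6_mem_orbit hL (Or.inl hc)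
    rw [← stable6_iff_of_mem_orbit hslice] at hc
    rcases mul_eq_zero.1 hdisc with hδ | h
    · exact not_stable6_slice6_zero _ (hδ ▸ hc)
    · exact not_stable6_slice6_of_sq_eq hL (sub_eq_zero.1 (pow_eq_zero_iff two_ne_zero |>.1 h)) hc
  · have hslice := Nondegenerate6.slice6_mem_orbit hL (Or.inr hc)
    rw [← stable6_iff_of_mem_orbit hslice, stable6_iff]
    refine ⟨?_, finite_stabilizer_slice6 _ _⟩
    rw [orbit_eq_iff.2 hslice]
    exact isZariskiClosed_orbit6 hL hc

end Criterion

section PrimeFields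

variable {L : Type*} [Field L] [Infinite L]

theorem exists_stable6_intCast (hL : ∀ x : L, IsSquare x) :
    ∃ c : Fin 10 → L, (∀ i, ∃ z : ℤ, c i = z) ∧ Stable6 c := by
  obtain ⟨z, hz⟩ : ∃ z : ℤ, (16 - 8 * z ^ 2 + z ^ 4 : L) ≠ 0 := by
    by_cases h2 : (2 : L) = 0
    · exact ⟨1, by simp [show (16 : L) = 2 * 8 by norm_num, show (8 : L) = 2 * 4 by norm_num, h2]⟩
    · exact ⟨0, by simpa [show (16 : L) = 2 ^ 4 by norm_num]⟩
  refine ⟨![1, 0, 1, 0, 0, 1, (z : L), 1, 0, 1], fun i => ?_, ?_⟩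
  · refine ⟨(![1, 0, 1, 0, 0, 1, z, 1, 0, 1] : Fin 10 → ℤ) i, ?_⟩
    fin_cases i <;> simp
  · rw [stable6_iff_disc6_ne_zero hL, disc6_split_family]
    simpa using hz

theorem stable6_dual_cyclic_iff (hL : ∀ x : L, IsSquare x) (b j e g r : Lˣ) :
    Stable6 ![0, (b : L), 0, (e : L), (g : L), 0, (j : L), 0, 0, (r : L)] ↔ (2 : L) ≠ 0 := by
  rw [stable6_iff_disc6_ne_zero hL, disc6_dual_cyclic]
  simp [show (16 : L) = 2 ^ 4 by norm_num]

end PrimeFields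

theorem stable6_prime_field_and_dual_cyclic_general
    (p : ℕ) {L : Type*} [Field L] [Infinite L] [CharP L p] (hL : ∀ x : L, IsSquare x)
    (Q : MvPolynomial (Fin 10) ℤ)
    (hQ : 16 * Q =
      disc4 (beta1 * beta5) (beta1 * beta6 + beta2 * beta5) (beta2 * beta6 + beta3 * beta5)
        (beta3 * beta6 + beta4 * beta5) (beta4 * beta6)) :
    ((∃ c : Fin 10 → L, (∀ i, ∃ z : ℤ, c i = (z : L)) ∧ Stable6 c) ∧
      (∀ a d h j k r : L,
        Delta6 Q ![a, 0, d, 0, 0, h, j, k, 0, r] =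
          16 * a ^ 9 * d ^ 3 * h ^ 6 * k ^ 6 * r ^ 12
            - 8 * a ^ 8 * d ^ 2 * h ^ 6 * j ^ 2 * k ^ 6 * r ^ 12
            + a ^ 7 * d * h ^ 6 * j ^ 4 * k ^ 6 * r ^ 12)) ∧
    (∀ b j e g r : Lˣ,
      Delta6 Q ![0, (b : L), 0, (e : L), (g : L), 0, (j : L), 0, 0, (r : L)] =
        16 * (b : L) ^ 9 * (e : L) ^ 3 * (g : L) ^ 6 * (j : L) ^ 6 * (r : L) ^ 12 ∧
      (Stable6 ![0, (b : L), 0, (e : L), (g : L), 0, (j : L), 0, 0, (r : L)] ↔ p ≠ 2)) := by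
  have h2 : (2 : L) ≠ 0 ↔ p ≠ 2 := by
    rw [← Nat.cast_ofNat, Ne, CharP.cast_eq_zero_iff L p, Nat.dvd_prime Nat.prime_two,
      or_iff_right (CharP.char_ne_one L p)]
  have hΔ (c : Fin 10 → L) : Delta6 Q c = disc6 c := Delta6_eq_disc6 hQ c
  refine ⟨⟨exists_stable6_intCast hL, fun a d h j k r => ?_⟩, fun b j e g r => ⟨?_, ?_⟩⟩
  · rw [hΔ, disc6_split_family]
  · rw [hΔ, disc6_dual_cyclic]
  · rw [stable6_dual_cyclic_iff hL, h2]

/-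
STATEMENT 15 (Corollary 5.7): let p be a prime and L an algebraic closure of 𝔽_p.
(1) There is a stable vector in V₆ with all coordinates in the prime subfield 𝔽_p; and
for v = aXT² + dXU² + hYW² + (jX+kY)TU + rZUW one has
Δ₆(v) = 16a⁹d³h⁶k⁶r¹² − 8a⁸d²h⁶j²k⁶r¹² + a⁷dh⁶j⁴k⁶r¹².
(2) For b, j, e, g, r ∈ Lˣ, the dual cyclic vector v = bYT² + jXTU + eYU² + gXW² + rZUW
satisfies Δ₆(v) = 16b⁹e³g⁶j⁶r¹², and is stable if and only if p ≠ 2.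
Coordinates are in the order a,b,d,e,g,h,j,k,o,r.
-/
theorem stable6_prime_field_and_dual_cyclic
    (p : ℕ) (hp : p.Prime)
    {L : Type*} [Field L] [IsAlgClosed L] [CharP L p]
    (Q : MvPolynomial (Fin 10) ℤ)
    (hQ : 16 * Q =
      disc4 (beta1 * beta5) (beta1 * beta6 + beta2 * beta5) (beta2 * beta6 + beta3 * beta5)
        (beta3 * beta6 + beta4 * beta5) (beta4 * beta6)) :
    ((∃ c : Fin 10 → L, (∀ i, ∃ z : ℤ, c i = (z : L)) ∧ Stable6 c) ∧
      (∀ a d h j k r : L,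
        Delta6 Q ![a, 0, d, 0, 0, h, j, k, 0, r] =
          16 * a ^ 9 * d ^ 3 * h ^ 6 * k ^ 6 * r ^ 12
            - 8 * a ^ 8 * d ^ 2 * h ^ 6 * j ^ 2 * k ^ 6 * r ^ 12
            + a ^ 7 * d * h ^ 6 * j ^ 4 * k ^ 6 * r ^ 12)) ∧
    (∀ b j e g r : Lˣ,
      Delta6 Q ![0, (b : L), 0, (e : L), (g : L), 0, (j : L), 0, 0, (r : L)] =
        16 * (b : L) ^ 9 * (e : L) ^ 3 * (g : L) ^ 6 * (j : L) ^ 6 * (r : L) ^ 12 ∧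
      (Stable6 ![0, (b : L), 0, (e : L), (g : L), 0, (j : L), 0, 0, (r : L)] ↔ p ≠ 2)) :=
  stable6_prime_field_and_dual_cyclic_general p (fun x => IsAlgClosed.exists_eq_mul_self x) Q hQ
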